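/- Let f : {0,1}ⁿ → {0,1}ⁿ, let Q : ℝⁿ → [0,1]ⁿ be a continuous conversion of f, and let γ₁,…,γₙ > 0 be fixed. Then there exist μ > 0, T_min > 0, and a family (U^s)_{s∈{0,1}ⁿ} of nonempty open subsets of ℝ^{2n} with U^s ⊆ W^s ∩ [x⁻, x⁺]^{2n}, such that for every choice of γ_{n+1},…,γ_{2n} ∈ (0, μ), every s ∈ {0,1}ⁿ that is monotone for f and is not a fixed point of f, and every solution x of D₂(f,γ,Q) with x(0) ∈ U^s, there exists a time T ≥ T_min such that: (A) x(T) ∈ U^{f(s)}; (B) xᵢ(t) ≠ 0 for every i ∈ [n] with fᵢ(s) = sᵢ and every t ∈ [0, T]; (C) for every i ∈ [n] with fᵢ(s) ≠ sᵢ there is exactly one t ∈ [0, T] with xᵢ(t) = 0. -/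

import Mathlib

/-- The cubic `g(x) = 3x - x³ - 3`. -/
noncomputable def gcub (x : ℝ) : ℝ := 3 * x - x ^ 3 - 3

/-- The piecewise linear function `L`: `0` for `x ≤ -1`, `(x+1)/2` for
`-1 < x < 1`, and `1` for `x ≥ 1`. -/
noncomputable def Lpl (x : ℝ) : ℝ := if x ≤ -1 then 0 else if x < 1 then (x + 1) / 2 else 1

/-- `W^s ⊆ ℝⁿ`: the set of `x` with `xᵢ < -1` when `sᵢ = 0` and `xᵢ > 1`
when `sᵢ = 1`. -/
def Wset (n : ℕ) (s : Fin n → Bool) : Set (Fin n → ℝ) :=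
  {x | ∀ i, if s i then 1 < x i else x i < -1}

/-- `Q : ℝⁿ → [0,1]ⁿ` is a continuous conversion of the Boolean map `f`. -/
def IsConversion (n : ℕ) (f : (Fin n → Bool) → Fin n → Bool)
    (Q : (Fin n → ℝ) → Fin n → ℝ) : Prop :=
  Continuous Q ∧ (∀ x i, Q x i ∈ Set.Icc (0 : ℝ) 1) ∧
  ∀ s : Fin n → Bool, ∀ x ∈ Wset n s, ∀ i, Q x i = if f s i then 1 else 0

/-- `(x, y) : [0,∞) → ℝⁿ × ℝⁿ` is a solution of the system `D₂(f, γ, Q)`: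
`ẋᵢ = γᵢ (g(xᵢ) + 6 L(yᵢ))` and `ẏᵢ = γ'ᵢ (g(yᵢ) + 6 Qᵢ(x))`, where the
`xᵢ` are the signature variables and the `yᵢ = x_{n+i}` the signaling ones. -/
def IsSolD2 (n : ℕ) (γ γ' : Fin n → ℝ) (Q : (Fin n → ℝ) → Fin n → ℝ)
    (x y : ℝ → Fin n → ℝ) : Prop :=
  ∀ i : Fin n, ∀ t : ℝ, 0 ≤ t →
    HasDerivAt (fun u => x u i) (γ i * (gcub (x t i) + 6 * Lpl (y t i))) t ∧
    HasDerivAt (fun u => y u i) (γ' i * (gcub (y t i) + 6 * Q (x t) i)) t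

/-- The discretization `S(x)ᵢ = 1` iff `xᵢ > 0`. -/
noncomputable def Sdisc (n : ℕ) (x : Fin n → ℝ) : Fin n → Bool := fun i => decide (0 < x i)

/-- The switching set: some signature coordinate vanishes. -/
def Bzero (n : ℕ) : Set (Fin n → ℝ) := {x | ∃ i, x i = 0}

/-- `σ : ℕ → {0,1}ⁿ` is the Boolean itinerary of the trajectory `x : ℝ → P`
under the discretization `S` (with switching set `B`): there is a finite or
infinite strictly increasing sequence of switching times `t 0 = 0 < t 1 < ⋯`
(indices `< K`, tending to `∞` if `K = ⊤`) such that the trajectory stays off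
`B` except possibly at switching times, `S ∘ x` is constant equal to `σ k` on
the `k`-th interval (including `u = 0` for `k = 0`), the values on consecutive
intervals differ, and `σ` is extended constantly after the last interval.
This encodes the transversality property together with the itinerary. -/
def IsItinerary {P : Type*} (n : ℕ) (x : ℝ → P) (S : P → Fin n → Bool)
    (B : Set P) (σ : ℕ → Fin n → Bool) : Prop :=
  ∃ (K : ℕ∞) (t : ℕ → ℝ), 1 ≤ K ∧ t 0 = 0 ∧
    (∀ k : ℕ, ((k : ℕ∞) + 1) < K → t k < t (k + 1)) ∧
    (K = ⊤ → Filter.Tendsto t Filter.atTop Filter.atTop) ∧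
    (∀ u : ℝ, 0 ≤ u → (∀ k : ℕ, 1 ≤ k → (k : ℕ∞) < K → u ≠ t k) → x u ∉ B) ∧
    (∀ k : ℕ, (k : ℕ∞) < K → ∀ u : ℝ,
      (t k < u ∨ (k = 0 ∧ u = 0)) → (∀ _ : ((k : ℕ∞) + 1) < K, u < t (k + 1)) →
      S (x u) = σ k) ∧
    (∀ k : ℕ, ((k : ℕ∞) + 1) < K → σ (k + 1) ≠ σ k) ∧
    (∀ τ : ℕ, K ≤ (τ : ℕ∞) + 1 → σ (τ + 1) = σ τ)

/-!
Multiplying each coordinate by the sign of its target value turns a Boolean step into a climb: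
every signature variable has to reach the upper well, and those that flip start in the lower one.
With centred input `w`, the cubic field has a lower equilibrium as long as `w < 2 / 3`; hence a
signature variable leaves the lower well only once its signaling variable has reached `2 / 3`, and
it then crosses in a time that does not depend on the slow rates `γ'`. While no signature variable
is in transit, monotonicity of the state says that all signaling variables are driven upwards as
long as some signature variable is still down. During a transit they may be driven downwards, but
the total loss is of order `γ'`, so for small `γ'` no signaling variable of a crossing coordinate
falls far enough below `2 / 3` to stop the crossing. The first time at which all signature variables
are at least `4 / 3` is the required `T`.
-/

open Set Filter Topology

/-! ### Scalar differential inequalities -/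

section ScalarComparison

variable {u u' v v' w w' : ℝ → ℝ} {a b c r D : ℝ}

theorem continuousOn_of_forall_hasDerivAt {s : Set ℝ} (hv : ∀ t ∈ s, HasDerivAt v (v' t) t) :
    ContinuousOn v s :=
  fun t ht => (hv t ht).continuousAt.continuousWithinAt

theorem add_mul_sub_le_of_le_hasDerivAt (hab : a ≤ b)
    (hv : ∀ t ∈ Icc a b, HasDerivAt v (v' t) t) (hr : ∀ t ∈ Ioo a b, r ≤ v' t) :
    v a + r * (b - a) ≤ v b := by
  have hmean : r * (b - a) ≤ v b - v a := by
    refine (convex_Icc a b).mul_sub_le_image_sub_of_le_deriv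
      (continuousOn_of_forall_hasDerivAt hv)
      (fun t ht => (hv t (interior_subset ht)).differentiableAt.differentiableWithinAt)
      (fun t ht => ?_) a (left_mem_Icc.2 hab) b (right_mem_Icc.2 hab) hab
    rw [(hv t (interior_subset ht)).deriv]
    exact hr t (by rwa [interior_Icc] at ht)
  linarith

theorem min_sub_le_of_le_hasDerivAt_add (hab : a ≤ b) (hr : 0 ≤ r)
    (hv : ∀ t ∈ Icc a b, HasDerivAt v (v' t) t) (hw : ∀ t ∈ Icc a b, HasDerivAt w (w' t) t)
    (hD : ∀ s ∈ Icc a b, w b - w s ≤ D)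
    (hlow : ∀ t ∈ Ioo a b, v t ≤ c → r ≤ v' t + w' t) :
    min c (v a + r * (b - a)) - D ≤ v b := by
  have growth_from : ∀ s ∈ Icc a b, (∀ t ∈ Ioo s b, v t ≤ c) → v s + r * (b - s) - D ≤ v b := by
    intro s hs hle
    have hsub : Icc s b ⊆ Icc a b := Icc_subset_Icc_left hs.1
    have := add_mul_sub_le_of_le_hasDerivAt hs.2
      (fun t ht => (hv t (hsub ht)).fun_add (hw t (hsub ht)))
      (fun t ht => hlow t (Ioo_subset_Ioo_left hs.1 ht) (hle t ht))
    linarith [hD s hs]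
  by_cases hc : ∀ t ∈ Ioo a b, v t ≤ c
  · linarith [growth_from a (left_mem_Icc.2 hab) hc, min_le_right c (v a + r * (b - a))]
  · push Not at hc
    obtain ⟨t, ht, hct⟩ := hc
    have hcompact : IsCompact (Icc a b ∩ v ⁻¹' Ici c) :=
      isCompact_Icc.of_isClosed_subset
        ((continuousOn_of_forall_hasDerivAt hv).preimage_isClosed_of_isClosed
          isClosed_Icc isClosed_Ici) inter_subset_left
    obtain ⟨s, ⟨hs, hcs : c ≤ v s⟩, hlast⟩ :=
      hcompact.exists_isGreatest ⟨t, Ioo_subset_Icc_self ht, hct.le⟩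
    have hgrow : 0 ≤ r * (b - s) := mul_nonneg hr (sub_nonneg.2 hs.2)
    have := growth_from s hs fun t ht => not_lt.1 fun hct =>
      ht.1.not_ge (hlast ⟨⟨hs.1.trans ht.1.le, ht.2.le⟩, hct.le⟩)
    linarith [min_le_left c (v a + r * (b - a))]

theorem le_of_hasDerivAt_pos_of_eq (hab : a ≤ b) (hv : ∀ t ∈ Icc a b, HasDerivAt v (v' t) t)
    (ha : c ≤ v a) (hpos : ∀ t ∈ Ico a b, v t = c → 0 < v' t) : c ≤ v b :=
  image_le_of_deriv_right_lt_deriv_boundary' (f := fun _ => c) (f' := fun _ => 0)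
    continuousOn_const (fun _ _ => hasDerivWithinAt_const _ _ _) ha
    (continuousOn_of_forall_hasDerivAt hv)
    (fun t ht => (hv t (Ico_subset_Icc_self ht)).hasDerivWithinAt)
    (fun t ht h => hpos t ht h.symm) (right_mem_Icc.2 hab)

theorem lt_of_hasDerivAt_pos_of_eq (hab : a < b) (hv : ∀ t ∈ Icc a b, HasDerivAt v (v' t) t)
    (ha : c ≤ v a) (hpos : ∀ t ∈ Icc a b, v t = c → 0 < v' t) : c < v b := by
  have hb : b ∈ Icc a b := right_mem_Icc.2 hab.le
  have hge : ∀ t ∈ Icc a b, c ≤ v t := fun t ht =>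
    le_of_hasDerivAt_pos_of_eq ht.1 (fun s hs => hv s ⟨hs.1, hs.2.trans ht.2⟩) ha
      (fun s hs => hpos s ⟨hs.1, hs.2.le.trans ht.2⟩)
  refine (hge b hb).lt_of_ne fun hcb => ?_
  have hderiv : 0 < deriv (fun t => v t - c) b := by
    rw [((hv b hb).sub_const c).deriv]
    exact hpos b hb hcb.symm
  obtain ⟨t, hsign, ht⟩ := (((eventually_nhdsWithin_sign_eq_of_deriv_pos hderiv
    (sub_eq_zero.2 hcb.symm)).filter_mono nhdsWithin_le_nhds).and (Ioo_mem_nhdsLT hab)).exists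
  rw [sign_neg (sub_neg.2 ht.2), sign_eq_neg_one_iff] at hsign
  linarith [hge t (Ioo_subset_Icc_self ht)]

theorem existsUnique_eq_of_hasDerivAt_pos_of_eq (hab : a ≤ b)
    (hv : ∀ t ∈ Icc a b, HasDerivAt v (v' t) t) (ha : v a ≤ c) (hb : c ≤ v b)
    (hpos : ∀ t ∈ Icc a b, v t = c → 0 < v' t) : ∃! t, t ∈ Icc a b ∧ v t = c := by
  have no_return : ∀ s ∈ Icc a b, ∀ t ∈ Icc a b, v s = c → v t = c → ¬ s < t :=
    fun s hs t ht hvs hvt hst => (lt_of_hasDerivAt_pos_of_eq hst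
      (fun τ hτ => hv τ ⟨hs.1.trans hτ.1, hτ.2.trans ht.2⟩) hvs.ge
      (fun τ hτ => hpos τ ⟨hs.1.trans hτ.1, hτ.2.trans ht.2⟩)).ne' hvt
  obtain ⟨t, ht, hvt⟩ :=
    intermediate_value_Icc hab (continuousOn_of_forall_hasDerivAt hv) ⟨ha, hb⟩
  exact ⟨t, ⟨ht, hvt⟩, fun s hs => le_antisymm (not_lt.1 (no_return t ht s hs.1 hvt hs.2))
    (not_lt.1 (no_return s hs.1 t ht hs.2 hvt))⟩

theorem pos_of_neg_mul_le_hasDerivAt {k : ℝ → ℝ} (hab : a ≤ b) (hk : ContinuousOn k (Icc a b))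
    (hu : ∀ t ∈ Icc a b, HasDerivAt u (u' t) t) (hle : ∀ t ∈ Ioo a b, -(k t * u t) ≤ u' t)
    (ha : 0 < u a) : 0 < u b := by
  set κ : ℝ → ℝ := IccExtend hab ((Icc a b).domRestrict k)
  have hκ_cont : Continuous κ := hk.domRestrict.Icc_extend'
  have hκ_eq : ∀ t ∈ Icc a b, κ t = k t := fun t ht => IccExtend_of_mem hab _ ht
  set E : ℝ → ℝ := fun t => Real.exp (∫ s in a..t, κ s) with hE
  have hE_deriv : ∀ t, HasDerivAt E (E t * κ t) t := fun t =>
    (hκ_cont.integral_hasStrictDerivAt a t).hasDerivAt.exp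
  have hgrow : u a * E a + 0 * (b - a) ≤ u b * E b :=
    add_mul_sub_le_of_le_hasDerivAt hab (fun t ht => (hu t ht).fun_mul (hE_deriv t)) fun t ht => by
      calc 0 ≤ (u' t + k t * u t) * E t :=
            mul_nonneg (by linarith [hle t ht]) (Real.exp_pos _).le
        _ = u' t * E t + u t * (E t * κ t) := by
            rw [hκ_eq t (Ioo_subset_Icc_self ht)]; ring
  have hEa : E a = 1 := by simp [hE]
  have : 0 < u b * E b := by rw [hEa] at hgrow; linarith
  exact pos_of_mul_pos_left this (Real.exp_pos _).le

theorem forall_mem_Icc_of_forall_mem_Ico {P : ℝ → Prop}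
    (hright : ∀ t ∈ Icc a b, P t → ∀ᶠ s in 𝓝[>] t, P s)
    (hleft : ∀ t ∈ Icc a b, (∀ s ∈ Ico a t, P s) → P t) : ∀ t ∈ Icc a b, P t := by
  by_contra! hfail
  have hbdd : BddBelow {t | t ∈ Icc a b ∧ ¬ P t} := ⟨a, fun t ht => ht.1.1⟩
  set s := sInf {t | t ∈ Icc a b ∧ ¬ P t}
  obtain ⟨t, ht⟩ := hfail
  have hs : s ∈ Icc a b := ⟨le_csInf ⟨t, ht⟩ fun τ hτ => hτ.1.1, (csInf_le hbdd ht).trans ht.1.2⟩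
  have hPs : P s := hleft s hs fun τ hτ => not_not.1 fun hPτ =>
    notMem_of_lt_csInf hτ.2 hbdd ⟨⟨hτ.1, hτ.2.le.trans hs.2⟩, hPτ⟩
  obtain ⟨d, hsd, hd⟩ := mem_nhdsGT_iff_exists_Ioo_subset.1 (hright s hs hPs)
  obtain ⟨τ, hτ, hτd⟩ := exists_lt_of_csInf_lt ⟨t, ht⟩ hsd
  have hsτ : s < τ := (csInf_le hbdd hτ).lt_of_ne fun h => hτ.2 (h ▸ hPs)
  exact hτ.2 (hd ⟨hsτ, hτd⟩)

theorem exists_hasDerivAt_plateau {a b c d : ℝ} (hab : a < b) (hcd : c < d) :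
    ∃ φ φ' : ℝ → ℝ, (∀ z, HasDerivAt φ (φ' z) z) ∧ (∀ z, φ' z ∈ Icc 0 1) ∧
      (∀ z ∉ Ioo a d, φ' z = 0) ∧ ∀ z ∈ Icc b c, φ' z = 1 := by
  have hdisj : Disjoint (Ioo a d)ᶜ (Icc b c) :=
    disjoint_compl_left_iff_subset.2 fun z hz => ⟨hab.trans_le hz.1, hz.2.trans_lt hcd⟩
  obtain ⟨ψ, hzero, hone, hmem⟩ :=
    exists_continuous_zero_one_of_isClosed isOpen_Ioo.isClosed_compl isClosed_Icc hdisj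
  exact ⟨fun z => ∫ y in 0..z, ψ y, ψ,
    fun z => (ψ.continuous.integral_hasStrictDerivAt 0 z).hasDerivAt, hmem, hzero, hone⟩

end ScalarComparison

/-! ### The cubic field -/

/-- The velocity `g(z) + 6l` of both kinds of variables, written in the centred input `w = 2l - 1`,
so that it is odd in `(z, w)`. -/
def cubicField (z w : ℝ) : ℝ := 3 * z - z ^ 3 + 3 * w

theorem gcub_add_six_mul (z l : ℝ) : gcub z + 6 * l = cubicField z (2 * l - 1) := by
  unfold gcub cubicField; ring

theorem cubicField_neg (z w : ℝ) : cubicField (-z) (-w) = -cubicField z w := by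
  unfold cubicField; ring

-- The double root at `z = -1` makes `w = 2/3` the input at which the lower equilibrium disappears.
theorem cubicField_eq (z w : ℝ) : cubicField z w = (2 - z) * (z + 1) ^ 2 + (3 * w - 2) := by
  unfold cubicField; ring

theorem sub_two_le_cubicField {z : ℝ} (hz : z ≤ 2) (w : ℝ) : 3 * w - 2 ≤ cubicField z w := by
  rw [cubicField_eq]
  exact le_add_of_nonneg_left (mul_nonneg (sub_nonneg.2 hz) (sq_nonneg _))

theorem cubicField_sub_cubicField (p z w : ℝ) :
    cubicField z w - cubicField p w = (z ^ 2 + z * p + p ^ 2 - 3) * (p - z) := by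
  unfold cubicField; ring

theorem abs_cubicField_le {z w : ℝ} (hz : |z| ≤ 5 / 2) (hw : |w| ≤ 1) :
    |cubicField z w| ≤ 27 := by
  have hcube : |z ^ 3| ≤ (5 / 2) ^ 3 := by
    rw [abs_pow]; exact pow_le_pow_left₀ (abs_nonneg z) hz 3
  rw [abs_le] at *
  unfold cubicField
  constructor <;> linarith

/-- The centred version `2L - 1` of the piecewise linear function `L`; it clamps to `[-1, 1]`. -/
noncomputable def centeredLpl (y : ℝ) : ℝ := 2 * Lpl y - 1

theorem abs_centeredLpl_le (y : ℝ) : |centeredLpl y| ≤ 1 := by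
  unfold centeredLpl Lpl
  rw [abs_le]
  split_ifs <;> constructor <;> linarith

theorem centeredLpl_neg (y : ℝ) : centeredLpl (-y) = -centeredLpl y := by
  unfold centeredLpl Lpl
  split_ifs <;> linarith

theorem le_centeredLpl_iff {r y : ℝ} (hr : r ∈ Ioc (-1) 1) : r ≤ centeredLpl y ↔ r ≤ y := by
  obtain ⟨hr₁, hr₂⟩ := hr
  unfold centeredLpl Lpl
  split_ifs <;> constructor <;> intro <;> linarith

/-- The real sign `±1` encoding a Boolean value. -/
def boolSign (b : Bool) : ℝ := if b then 1 else -1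

theorem boolSign_mul_self (b : Bool) : boolSign b * boolSign b = 1 := by
  cases b <;> simp [boolSign]

theorem abs_boolSign (b : Bool) : |boolSign b| = 1 := by
  cases b <;> simp [boolSign]

theorem boolSign_ne_zero (b : Bool) : boolSign b ≠ 0 := by
  cases b <;> simp [boolSign]

theorem abs_boolSign_mul (b : Bool) (z : ℝ) : |boolSign b * z| = |z| := by
  rw [abs_mul, abs_boolSign, one_mul]

theorem boolSign_eq_neg_of_ne {b c : Bool} (h : b ≠ c) : boolSign c = -boolSign b := by
  cases b <;> cases c <;> simp_all [boolSign]

theorem cubicField_boolSign_mul (b : Bool) (z w : ℝ) :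
    cubicField (boolSign b * z) (boolSign b * w) = boolSign b * cubicField z w := by
  cases b <;> simp [boolSign, cubicField_neg]

theorem centeredLpl_boolSign_mul (b : Bool) (y : ℝ) :
    centeredLpl (boolSign b * y) = boolSign b * centeredLpl y := by
  cases b <;> simp [boolSign, centeredLpl_neg]

/-- `v` solves the scalar equation `v̇ = γ · cubicField(v, w)` with input `w` on `[0, ∞)`. -/
def IsCubicSol (γ : ℝ) (w v : ℝ → ℝ) : Prop :=
  ∀ t, 0 ≤ t → HasDerivAt v (γ * cubicField (v t) (w t)) t

namespace IsCubicSol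

variable {γ : ℝ} {w v : ℝ → ℝ}

theorem hasDerivAt_of_mem_Icc (hv : IsCubicSol γ w v) {a b : ℝ} (ha : 0 ≤ a) :
    ∀ t ∈ Icc a b, HasDerivAt v (γ * cubicField (v t) (w t)) t :=
  fun t ht => hv t (ha.trans ht.1)

theorem boolSign_mul (hv : IsCubicSol γ w v) (b : Bool) :
    IsCubicSol γ (fun t => boolSign b * w t) (fun t => boolSign b * v t) := fun t ht =>
  ((hv t ht).const_mul (boolSign b)).congr_deriv (by rw [cubicField_boolSign_mul]; ring)

theorem neg (hv : IsCubicSol γ w v) : IsCubicSol γ (fun t => -w t) (fun t => -v t) := fun t ht =>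
  (hv t ht).fun_neg.congr_deriv (by rw [cubicField_neg, mul_neg])

theorem lt_of_cubicField_eq_zero (hv : IsCubicSol γ w v) (hγ : 0 ≤ γ) {p m : ℝ}
    (hp : cubicField p m = 0) (hw : ∀ t, 0 ≤ t → w t ≤ m) (h0 : v 0 < p) {t : ℝ} (ht : 0 ≤ t) :
    v t < p := by
  have hcont : ContinuousOn v (Icc 0 t) :=
    continuousOn_of_forall_hasDerivAt (hv.hasDerivAt_of_mem_Icc le_rfl)
  refine sub_pos.1 (pos_of_neg_mul_le_hasDerivAt (u := fun s => p - v s)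
    (k := fun s => γ * (v s ^ 2 + v s * p + p ^ 2 - 3)) ht (by fun_prop)
    (fun s hs => (hv s hs.1).const_sub p) (fun s hs => ?_) (sub_pos.2 h0))
  have hcmp : cubicField (v s) (w s) ≤ (v s ^ 2 + v s * p + p ^ 2 - 3) * (p - v s) := by
    rw [← cubicField_sub_cubicField p (v s) m, hp]
    unfold cubicField
    linarith [hw s hs.1.le]
  linarith [mul_le_mul_of_nonneg_left hcmp hγ]

theorem abs_lt_of_cubicField_eq_zero (hv : IsCubicSol γ w v) (hγ : 0 ≤ γ) {p m : ℝ}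
    (hp : cubicField p m = 0) (hw : ∀ t, 0 ≤ t → |w t| ≤ m) (h0 : |v 0| < p) {t : ℝ}
    (ht : 0 ≤ t) : |v t| < p := by
  rw [abs_lt] at h0 ⊢
  have hneg := hv.neg.lt_of_cubicField_eq_zero hγ hp
    (fun s hs => (neg_le_abs (w s)).trans (hw s hs)) (neg_lt.1 h0.1) ht
  exact ⟨neg_lt.1 hneg, hv.lt_of_cubicField_eq_zero hγ hp
    (fun s hs => (le_abs_self (w s)).trans (hw s hs)) h0.2 ht⟩

theorem exists_two_thirds_le_of_neg_one_lt (hv : IsCubicSol γ w v) (hγ : 0 < γ) {a b : ℝ}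
    (ha0 : 0 ≤ a) (hab : a ≤ b) (ha : v a ≤ -1) (hb : -1 < v b) : ∃ t ∈ Icc a b, 2 / 3 ≤ w t := by
  by_contra! hlow
  have hle : 1 ≤ -v b := by
    refine le_of_hasDerivAt_pos_of_eq (v := fun t => -v t) hab
      (hv.neg.hasDerivAt_of_mem_Icc ha0) (by linarith) (fun t ht hvt => mul_pos hγ ?_)
    have hwt := hlow t (Ico_subset_Icc_self ht)
    rw [hvt]
    unfold cubicField
    linarith
  linarith

theorem eventually_two_le (hv : IsCubicSol γ w v) (hγ : 0 < γ) {r : ℝ} (hr : 2 / 3 < r)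
    (hw : ∀ᶠ t in atTop, r ≤ w t) : ∀ᶠ t in atTop, 2 ≤ v t := by
  obtain ⟨a, ha⟩ := eventually_atTop.1 (hw.and (eventually_ge_atTop 0))
  have hrate : 0 < γ * (3 * r - 2) := mul_pos hγ (by linarith)
  have hline : Tendsto (fun t => v a + γ * (3 * r - 2) * (t - a)) atTop atTop :=
    tendsto_atTop_add_const_left _ _
      ((tendsto_id.atTop_add tendsto_const_nhds).const_mul_atTop hrate)
  filter_upwards [eventually_ge_atTop a, hline.eventually_ge_atTop 2] with t hat hlt
  have hgain := min_sub_le_of_le_hasDerivAt_add (w := fun _ => 0) (w' := fun _ => 0) (c := 2)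
    (D := 0) hat hrate.le (hv.hasDerivAt_of_mem_Icc (ha a le_rfl).2)
    (fun s _ => hasDerivAt_const s 0) (fun _ _ => (sub_self _).le) (fun s hs hvs => by
      have hfield := sub_two_le_cubicField hvs (w s)
      rw [add_zero]
      exact mul_le_mul_of_nonneg_left (by linarith [(ha s hs.1.le).1]) hγ.le)
  rwa [min_eq_left hlt, sub_zero] at hgain

end IsCubicSol

/-! ### The normalized dynamics during one Boolean step -/

section NormalizedRun

variable {ι : Type*}

/-- The state `(x, y)` of a coordinate that has settled in the upper well. The slack `δ² / 96`
below the critical input `2 / 3` is half of that allowed by `Regime`; the difference absorbs the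
loss during the transits. -/
def IsUp (δ x y : ℝ) : Prop := 5 / 4 < x ∧ 2 / 3 - δ ^ 2 / 96 < y

/-- The invariant of a normalized run: coordinates outside `F` stay up, and every signature variable
that has left the lower well is driven upwards. -/
def Regime (F : Set ι) (δ : ℝ) (x y : ι → ℝ) : Prop :=
  ∀ j, (j ∉ F → 5 / 4 < x j) ∧ (x j < -1 + δ / 2 ∨ 2 / 3 - δ ^ 2 / 48 < y j)

theorem isOpen_regime [Finite ι] (F : Set ι) (δ : ℝ) :
    IsOpen {p : (ι → ℝ) × (ι → ℝ) | Regime F δ p.1 p.2} := by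
  have hx (j : ι) : Continuous fun p : (ι → ℝ) × (ι → ℝ) => p.1 j := by fun_prop
  have hy (j : ι) : Continuous fun p : (ι → ℝ) × (ι → ℝ) => p.2 j := by fun_prop
  simp only [Regime, ofPred_forall, ofPred_and, ofPred_or]
  exact isOpen_iInter_of_finite fun j =>
    (isOpen_iInter_of_finite fun _ => isOpen_lt continuous_const (hx j)).inter
      ((isOpen_lt (hx j) continuous_const).union (isOpen_lt continuous_const (hy j)))

theorem le_cubicField_of_transit {δ x y : ℝ} (hδ : 0 < δ) (hδ' : δ ≤ 1 / 4)
    (hx : x ∈ Icc (-1 + δ / 2) (3 / 2)) (hy : 2 / 3 - δ ^ 2 / 48 < y) :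
    δ ^ 2 / 16 ≤ cubicField x (centeredLpl y) := by
  have hL : 2 / 3 - δ ^ 2 / 48 ≤ centeredLpl y :=
    (le_centeredLpl_iff ⟨by nlinarith, by nlinarith⟩).2 hy.le
  have hcube : 1 / 2 * (δ / 2) ^ 2 ≤ (2 - x) * (x + 1) ^ 2 := by
    gcongr <;> linarith [hx.1, hx.2]
  rw [cubicField_eq]
  linarith

variable [Fintype ι]

/-- A bound for the loss of a signaling variable, per unit of its rate, during all the transits
of the signature variables: the velocity deficit `6` of the signaling variable over the least
transit velocity `δ² / 16`, times the diameter `5` of the box over the rates. -/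
noncomputable def transitLoss (γ : ι → ℝ) (δ : ℝ) : ℝ := 96 / δ ^ 2 * ∑ j, 5 / γ j

/-- The bound `μ` on the rates of the signaling variables. -/
noncomputable def slowRateBound (γ : ι → ℝ) (δ : ℝ) : ℝ := δ ^ 2 / (100 * (transitLoss γ δ + 1))

theorem transitLoss_nonneg {γ : ι → ℝ} (hγ : ∀ i, 0 < γ i) (δ : ℝ) : 0 ≤ transitLoss γ δ :=
  mul_nonneg (by positivity) (Finset.sum_nonneg fun j _ => (div_pos (by norm_num) (hγ j)).le)

theorem slowRateBound_pos {γ : ι → ℝ} (hγ : ∀ i, 0 < γ i) {δ : ℝ} (hδ : 0 < δ) :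
    0 < slowRateBound γ δ := by
  have := transitLoss_nonneg hγ δ
  unfold slowRateBound
  positivity

/-- A solution of `D₂` during one Boolean step, each coordinate multiplied by the sign of its target
value, so that every coordinate has to end up positive. `F` is the set of coordinates that flip
and `q` the centred input of the signaling variables. The field `le_input` is where the
monotonicity of the state enters: as long as some signature variable lags behind, and all of them
are outside the transit zone, the input points to the target. -/
structure IsNormalizedRun (γ γ' : ι → ℝ) (F : Set ι) (δ : ℝ) (X Y q : ℝ → ι → ℝ) : Prop where
  rate_pos : ∀ i, 0 < γ i
  slowRate_pos : ∀ i, 0 < γ' i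
  slowRate_lt : ∀ i, γ' i < slowRateBound γ δ
  width_pos : 0 < δ
  width_le : δ ≤ 1 / 4
  signature : ∀ i, IsCubicSol (γ i) (fun t => centeredLpl (Y t i)) (fun t => X t i)
  signaling : ∀ i, IsCubicSol (γ' i) (fun t => q t i) (fun t => Y t i)
  abs_input_le : ∀ t, 0 ≤ t → ∀ i, |q t i| ≤ 1
  abs_signature_le : ∀ t, 0 ≤ t → ∀ i, |X t i| ≤ 5 / 2
  abs_signaling_le : ∀ t, 0 ≤ t → ∀ i, |Y t i| ≤ 5 / 2
  le_input : ∀ t, 0 ≤ t → (∀ j ∉ F, 5 / 4 < X t j) → (∀ j, X t j ∉ Icc (-1 + δ) (4 / 3)) →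
    (∃ j, X t j < 4 / 3) → ∀ i, 5 / 6 ≤ q t i
  isUp_init : ∀ j ∉ F, IsUp δ (X 0 j) (Y 0 j)
  isDown_init : ∀ j ∈ F, X 0 j < -1 ∧ Y 0 j < -1 / 2

namespace IsNormalizedRun

variable {γ γ' : ι → ℝ} {F : Set ι} {δ : ℝ} {X Y q : ℝ → ι → ℝ}

theorem continuousAt (h : IsNormalizedRun γ γ' F δ X Y q) {t : ℝ} (ht : 0 ≤ t) :
    ContinuousAt (fun s => (X s, Y s)) t :=
  (continuousAt_pi.2 fun i => (h.signature i t ht).continuousAt).prodMk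
    (continuousAt_pi.2 fun i => (h.signaling i t ht).continuousAt)

theorem slowRate_mul_lt (h : IsNormalizedRun γ γ' F δ X Y q) (i : ι) :
    γ' i * (100 * (transitLoss γ δ + 1)) < δ ^ 2 := by
  have := transitLoss_nonneg h.rate_pos δ
  exact (lt_div_iff₀ (by positivity)).1 (h.slowRate_lt i)

theorem slowRate_mul_transitLoss_lt (h : IsNormalizedRun γ γ' F δ X Y q) (i : ι) :
    γ' i * transitLoss γ δ < δ ^ 2 / 96 := by
  have hloss := mul_nonneg (h.slowRate_pos i).le (transitLoss_nonneg h.rate_pos δ)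
  linarith [h.slowRate_mul_lt i, h.slowRate_pos i]

theorem le_cubicField_of_regime (h : IsNormalizedRun γ γ' F δ X Y q) {t : ℝ}
    (hR : Regime F δ (X t) (Y t)) {j : ι} (hj : X t j ∈ Icc (-1 + δ / 2) (3 / 2)) :
    δ ^ 2 / 16 ≤ cubicField (X t j) (centeredLpl (Y t j)) :=
  le_cubicField_of_transit h.width_pos h.width_le hj ((hR j).2.resolve_left hj.1.not_gt)

theorem signature_deriv_pos (h : IsNormalizedRun γ γ' F δ X Y q) {t : ℝ} {j : ι}
    (hj : X t j ∈ Icc (-1 + δ / 2) (3 / 2)) (hY : 2 / 3 - δ ^ 2 / 48 < Y t j) :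
    0 < γ j * cubicField (X t j) (centeredLpl (Y t j)) := by
  have hδ := h.width_pos
  exact mul_pos (h.rate_pos j)
    ((by positivity : 0 < δ ^ 2 / 16).trans_le (le_cubicField_of_transit hδ h.width_le hj hY))

section Corrector

variable {φ φ' : ℝ → ℝ}

theorem hasDerivAt_sum_div (h : IsNormalizedRun γ γ' F δ X Y q)
    (hφ : ∀ z, HasDerivAt φ (φ' z) z) {t : ℝ} (ht : 0 ≤ t) :
    HasDerivAt (fun s => ∑ j, φ (X s j) / γ j)
      (∑ j, φ' (X t j) * cubicField (X t j) (centeredLpl (Y t j))) t := by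
  refine HasDerivAt.fun_sum fun j _ => ?_
  refine (((hφ (X t j)).comp t (h.signature j t ht)).div_const (γ j)).congr_deriv ?_
  have := (h.rate_pos j).ne'
  field_simp

theorem sum_div_sub_sum_div_le (h : IsNormalizedRun γ γ' F δ X Y q)
    (hφ : ∀ z, HasDerivAt φ (φ' z) z) (hφ' : ∀ z, φ' z ∈ Icc 0 1) {s t : ℝ} (hs : 0 ≤ s)
    (ht : 0 ≤ t) : ∑ j, φ (X t j) / γ j - ∑ j, φ (X s j) / γ j ≤ ∑ j, 5 / γ j := by
  rw [← Finset.sum_sub_distrib]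
  refine Finset.sum_le_sum fun j _ => ?_
  rw [← sub_div]
  refine div_le_div_of_nonneg_right ?_ (h.rate_pos j).le
  have hlip : |φ (X t j) - φ (X s j)| ≤ 1 * |X t j - X s j| :=
    convex_univ.norm_image_sub_le_of_norm_hasDerivWithin_le
      (fun z _ => (hφ z).hasDerivWithinAt)
      (fun z _ => abs_le.2 ⟨by linarith [(hφ' z).1], (hφ' z).2⟩) (mem_univ _) (mem_univ _)
  calc φ (X t j) - φ (X s j) ≤ 1 * |X t j - X s j| := (le_abs_self _).trans hlip
    _ ≤ |X t j| + |X s j| := by rw [one_mul]; exact abs_sub _ _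
    _ ≤ 5 := by linarith [h.abs_signature_le t ht j, h.abs_signature_le s hs j]

theorem mul_cubicField_nonneg (h : IsNormalizedRun γ γ' F δ X Y q) (hφ' : ∀ z, φ' z ∈ Icc 0 1)
    (hzero : ∀ z ∉ Ioo (-1 + δ / 2) (3 / 2), φ' z = 0) {t : ℝ}
    (hR : Regime F δ (X t) (Y t)) (j : ι) :
    0 ≤ φ' (X t j) * cubicField (X t j) (centeredLpl (Y t j)) := by
  by_cases hj : X t j ∈ Ioo (-1 + δ / 2) (3 / 2)
  · exact mul_nonneg (hφ' _).1 ((by positivity : 0 ≤ δ ^ 2 / 16).trans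
      (h.le_cubicField_of_regime hR (Ioo_subset_Icc_self hj)))
  · rw [hzero _ hj, zero_mul]

theorem half_le_corrected_velocity (h : IsNormalizedRun γ γ' F δ X Y q)
    (hφ' : ∀ z, φ' z ∈ Icc 0 1) (hzero : ∀ z ∉ Ioo (-1 + δ / 2) (3 / 2), φ' z = 0)
    (hone : ∀ z ∈ Icc (-1 + δ) (4 / 3), φ' z = 1) {t : ℝ} (ht : 0 ≤ t)
    (hR : Regime F δ (X t) (Y t)) (hlag : ∃ j, X t j < 4 / 3) {i : ι} (hY : Y t i ≤ 1) :
    1 / 2 ≤ cubicField (Y t i) (q t i) +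
      96 / δ ^ 2 * ∑ j, φ' (X t j) * cubicField (X t j) (centeredLpl (Y t j)) := by
  have hδ := h.width_pos
  have hterm := h.mul_cubicField_nonneg hφ' hzero hR
  have hfield := sub_two_le_cubicField (hY.trans one_le_two) (q t i)
  by_cases htransit : ∃ j, X t j ∈ Icc (-1 + δ) (4 / 3)
  · obtain ⟨j, hj⟩ := htransit
    have hspeed : δ ^ 2 / 16 ≤ ∑ j, φ' (X t j) * cubicField (X t j) (centeredLpl (Y t j)) := by
      calc δ ^ 2 / 16 ≤ φ' (X t j) * cubicField (X t j) (centeredLpl (Y t j)) := by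
            rw [hone _ hj, one_mul]
            exact h.le_cubicField_of_regime hR ⟨by linarith [hj.1], by linarith [hj.2]⟩
        _ ≤ _ := Finset.single_le_sum (fun j _ => hterm j) (Finset.mem_univ j)
    have hgain : 6 ≤ 96 / δ ^ 2 *
        ∑ j, φ' (X t j) * cubicField (X t j) (centeredLpl (Y t j)) := by
      calc (6 : ℝ) = 96 / δ ^ 2 * (δ ^ 2 / 16) := by field_simp; norm_num
        _ ≤ _ := by gcongr
    linarith [(abs_le.1 (h.abs_input_le t ht i)).1]
  · push Not at htransit
    have hinput := h.le_input t ht (fun j => (hR j).1) htransit hlag i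
    have hsum := mul_nonneg (by positivity : 0 ≤ 96 / δ ^ 2)
      (Finset.sum_nonneg fun j (_ : j ∈ Finset.univ) => hterm j)
    linarith

end Corrector

-- The input may be adverse while some signature variable is in transit. Adding a multiple of
-- `∑ φ(X_j) / γ_j`, with `φ` increasing exactly across the transit zone, restores growth at a
-- positive rate, and that correction is bounded independently of the number and order of transits.
theorem min_sub_transitLoss_le (h : IsNormalizedRun γ γ' F δ X Y q) {a b : ℝ} (ha : 0 ≤ a)
    (hab : a ≤ b) (hR : ∀ t ∈ Ioo a b, Regime F δ (X t) (Y t))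
    (hlag : ∀ t ∈ Ioo a b, ∃ j, X t j < 4 / 3) (i : ι) :
    min 1 (Y a i + γ' i * (1 / 2) * (b - a)) - γ' i * transitLoss γ δ ≤ Y b i := by
  have hδ := h.width_pos
  have hγ' := (h.slowRate_pos i).le
  obtain ⟨φ, φ', hφ, hφ', hzero, hone⟩ := exists_hasDerivAt_plateau
    (by linarith : -1 + δ / 2 < -1 + δ) (by norm_num : (4 / 3 : ℝ) < 3 / 2)
  refine min_sub_le_of_le_hasDerivAt_add (v := fun t => Y t i)
    (w := fun t => γ' i * (96 / δ ^ 2 * ∑ j, φ (X t j) / γ j)) hab (by positivity)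
    ((h.signaling i).hasDerivAt_of_mem_Icc ha)
    (fun t ht => ((h.hasDerivAt_sum_div hφ (ha.trans ht.1)).const_mul _).const_mul _) ?_ ?_
  · intro s hs
    rw [← mul_sub, ← mul_sub]
    unfold transitLoss
    gcongr
    exact h.sum_div_sub_sum_div_le hφ hφ' (ha.trans hs.1) (ha.trans hab)
  · intro t ht hY
    rw [← mul_add]
    exact mul_le_mul_of_nonneg_left (h.half_le_corrected_velocity hφ' hzero hone
      (ha.trans ht.1.le) (hR t ht) (hlag t ht) hY) hγ'

theorem sub_lt_signaling_of_le (h : IsNormalizedRun γ γ' F δ X Y q) {a b : ℝ} (ha : 0 ≤ a)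
    (hab : a ≤ b) (hR : ∀ t ∈ Ioo a b, Regime F δ (X t) (Y t))
    (hlag : ∀ t ∈ Ioo a b, ∃ j, X t j < 4 / 3) {i : ι} {r : ℝ} (hr : r ≤ 1) (hY : r ≤ Y a i) :
    r - δ ^ 2 / 96 < Y b i := by
  have hgrow : 0 ≤ γ' i * (1 / 2) * (b - a) :=
    mul_nonneg (mul_nonneg (h.slowRate_pos i).le (by norm_num)) (sub_nonneg.2 hab)
  have hmin : r ≤ min 1 (Y a i + γ' i * (1 / 2) * (b - a)) := le_min hr (by linarith)
  linarith [h.min_sub_transitLoss_le ha hab hR hlag i, h.slowRate_mul_transitLoss_lt i]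

theorem lt_signaling_of_flipped (h : IsNormalizedRun γ γ' F δ X Y q) {t : ℝ} (ht : 0 ≤ t)
    (hR : ∀ s ∈ Ico 0 t, Regime F δ (X s) (Y s)) (hlag : ∀ s ∈ Ico 0 t, ∃ j, X s j < 4 / 3)
    {j : ι} (hj : j ∈ F) (hX : -1 < X t j) : 2 / 3 - δ ^ 2 / 96 < Y t j := by
  obtain ⟨s, hs, hLs⟩ := (h.signature j).exists_two_thirds_le_of_neg_one_lt (h.rate_pos j) le_rfl
    ht (h.isDown_init j hj).1.le hX
  have hYs : 2 / 3 ≤ Y s j := (le_centeredLpl_iff ⟨by norm_num, by norm_num⟩).1 hLs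
  exact h.sub_lt_signaling_of_le hs.1 hs.2 (fun τ hτ => hR τ ⟨hs.1.trans hτ.1.le, hτ.2⟩)
    (fun τ hτ => hlag τ ⟨hs.1.trans hτ.1.le, hτ.2⟩) (by norm_num) hYs

theorem regime_of_forall_lt (h : IsNormalizedRun γ γ' F δ X Y q) {t : ℝ} (ht : 0 ≤ t)
    (hR : ∀ s ∈ Ico 0 t, Regime F δ (X s) (Y s)) (hlag : ∀ s ∈ Ico 0 t, ∃ j, X s j < 4 / 3) :
    Regime F δ (X t) (Y t) := by
  have hδ := h.width_pos
  have hδ' := h.width_le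
  intro j
  by_cases hj : j ∈ F
  · refine ⟨fun hnot => absurd hj hnot, or_iff_not_imp_left.2 fun hX => ?_⟩
    have := h.lt_signaling_of_flipped ht hR hlag hj (by linarith)
    nlinarith
  · obtain ⟨hX0, hY0⟩ := h.isUp_init j hj
    have hY : 2 / 3 - δ ^ 2 / 48 < Y t j := by
      have := h.sub_lt_signaling_of_le le_rfl ht (fun s hs => hR s (Ioo_subset_Ico_self hs))
        (fun s hs => hlag s (Ioo_subset_Ico_self hs)) (by nlinarith) hY0.le
      linarith
    refine ⟨fun _ => ?_, Or.inr hY⟩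
    rcases ht.eq_or_lt with rfl | ht
    · exact hX0
    refine lt_of_hasDerivAt_pos_of_eq ht ((h.signature j).hasDerivAt_of_mem_Icc le_rfl) hX0.le
      fun s hs hXs => h.signature_deriv_pos (by rw [hXs]; constructor <;> linarith) ?_
    rcases hs.2.eq_or_lt with rfl | hst
    · exact hY
    · exact (hR s ⟨hs.1, hst⟩ j).2.resolve_left (by linarith)

theorem regime_of_lagging (h : IsNormalizedRun γ γ' F δ X Y q) {T : ℝ}
    (hlag : ∀ t ∈ Ico 0 T, ∃ j, X t j < 4 / 3) : ∀ t ∈ Icc 0 T, Regime F δ (X t) (Y t) :=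
  forall_mem_Icc_of_forall_mem_Ico
    (fun _ ht hR => ((h.continuousAt ht.1).eventually
      ((isOpen_regime F δ).mem_nhds hR)).filter_mono nhdsWithin_le_nhds)
    fun _ ht hR => h.regime_of_forall_lt ht.1 hR fun s hs => hlag s ⟨hs.1, hs.2.trans_le ht.2⟩

theorem exists_forall_four_thirds_le (h : IsNormalizedRun γ γ' F δ X Y q) :
    ∃ t, 0 ≤ t ∧ ∀ j, 4 / 3 ≤ X t j := by
  by_contra! hlag
  have hδ := h.width_pos
  have hδ' := h.width_le
  have hR : ∀ t, 0 ≤ t → Regime F δ (X t) (Y t) := fun t ht =>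
    h.regime_of_lagging (fun s hs => hlag s hs.1) t (right_mem_Icc.2 ht)
  have hY : ∀ i, ∀ᶠ t in atTop, 5 / 6 ≤ Y t i := by
    intro i
    have hrate : 0 < γ' i * (1 / 2) := mul_pos (h.slowRate_pos i) (by norm_num)
    have hline : Tendsto (fun t => Y 0 i + γ' i * (1 / 2) * (t - 0)) atTop atTop :=
      tendsto_atTop_add_const_left _ _ (by simpa using tendsto_id.const_mul_atTop hrate)
    filter_upwards [eventually_ge_atTop 0, hline.eventually_ge_atTop 1] with t ht hlt
    have hgain := h.min_sub_transitLoss_le le_rfl ht (fun s hs => hR s hs.1.le)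
      (fun s hs => hlag s hs.1.le) i
    rw [min_eq_left hlt] at hgain
    nlinarith [h.slowRate_mul_transitLoss_lt i]
  have hX : ∀ i, ∀ᶠ t in atTop, 2 ≤ X t i := fun i =>
    (h.signature i).eventually_two_le (h.rate_pos i) (by norm_num) <| (hY i).mono fun t hYt =>
      (le_centeredLpl_iff (r := 5 / 6) ⟨by norm_num, by norm_num⟩).2 hYt
  obtain ⟨t, hXt, ht⟩ := ((eventually_all.2 hX).and (eventually_ge_atTop 0)).exists
  obtain ⟨j, hj⟩ := hlag t ht
  linarith [hXt j]

theorem exists_first_forall_four_thirds_le (h : IsNormalizedRun γ γ' F δ X Y q) :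
    ∃ T, 0 ≤ T ∧ (∀ j, 4 / 3 ≤ X T j) ∧ ∀ t ∈ Ico 0 T, ∃ j, X t j < 4 / 3 := by
  have hclosed : IsClosed (Ici 0 ∩ X ⁻¹' Ici fun _ => 4 / 3) :=
    ContinuousOn.preimage_isClosed_of_isClosed
      (fun t ht => (h.continuousAt ht).fst.continuousWithinAt) isClosed_Ici isClosed_Ici
  have hbdd : BddBelow (Ici 0 ∩ X ⁻¹' Ici fun _ => 4 / 3) := ⟨0, fun t ht => ht.1⟩
  obtain ⟨hT, hXT⟩ := hclosed.csInf_mem h.exists_forall_four_thirds_le hbdd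
  refine ⟨_, hT, hXT, fun t ht => ?_⟩
  by_contra! hup
  exact notMem_of_lt_csInf ht.2 hbdd ⟨ht.1, hup⟩

theorem two_mul_transitLoss_add_one_le (h : IsNormalizedRun γ γ' F δ X Y q) {T : ℝ} (hT : 0 ≤ T)
    {j : ι} (hj : j ∈ F) (hY : 1 / 2 ≤ Y T j) : 2 * (transitLoss γ δ + 1) ≤ T := by
  have hγ' := h.slowRate_pos j
  have hrise : |Y T j - Y 0 j| ≤ γ' j * 27 * |T - 0| := by
    refine (convex_Icc 0 T).norm_image_sub_le_of_norm_hasDerivWithin_le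
      (fun t ht => (h.signaling j t ht.1).hasDerivWithinAt) (fun t ht => ?_)
      (left_mem_Icc.2 hT) (right_mem_Icc.2 hT)
    rw [Real.norm_eq_abs, abs_mul, abs_of_pos hγ']
    exact mul_le_mul_of_nonneg_left
      (abs_cubicField_le (h.abs_signaling_le t ht.1 j) (h.abs_input_le t ht.1 j)) hγ'.le
  have hslow : 1 ≤ γ' j * (27 * T) := by
    rw [sub_zero, abs_of_nonneg hT] at hrise
    linarith [le_abs_self (Y T j - Y 0 j), (h.isDown_init j hj).2]
  have hδ : δ ^ 2 ≤ 1 / 16 := by nlinarith [h.width_pos, h.width_le]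
  have hcompare : γ' j * (100 * (transitLoss γ δ + 1)) ≤ γ' j * (27 * T) := by
    linarith [h.slowRate_mul_lt j]
  linarith [le_of_mul_le_mul_left hcompare hγ']

theorem existsUnique_zero (h : IsNormalizedRun γ γ' F δ X Y q) {T : ℝ} (hT : 0 ≤ T)
    (hR : ∀ t ∈ Icc 0 T, Regime F δ (X t) (Y t)) {i : ι} (hi : i ∈ F) (hX : 0 ≤ X T i) :
    ∃! t, t ∈ Icc 0 T ∧ X t i = 0 := by
  have hδ := h.width_le
  refine existsUnique_eq_of_hasDerivAt_pos_of_eq hT ((h.signature i).hasDerivAt_of_mem_Icc le_rfl)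
    (by linarith [(h.isDown_init i hi).1]) hX fun t ht hXt =>
      h.signature_deriv_pos (by rw [hXt]; constructor <;> linarith)
        ((hR t ht i).2.resolve_left (by linarith))

theorem exists_switchTime (h : IsNormalizedRun γ γ' F δ X Y q) (hF : F.Nonempty) :
    ∃ T, 1 ≤ T ∧ (∀ i, IsUp δ (X T i) (Y T i)) ∧ (∀ i ∉ F, ∀ t ∈ Icc 0 T, X t i ≠ 0) ∧
      ∀ i ∈ F, ∃! t, t ∈ Icc 0 T ∧ X t i = 0 := by
  have hδ := h.width_pos
  have hδ' := h.width_le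
  obtain ⟨T, hT, hXT, hlag⟩ := h.exists_first_forall_four_thirds_le
  have hR := h.regime_of_lagging hlag
  have hYflip : ∀ i ∈ F, 2 / 3 - δ ^ 2 / 96 < Y T i := fun i hi =>
    h.lt_signaling_of_flipped hT (fun t ht => hR t (Ico_subset_Icc_self ht)) hlag hi
      (by linarith [hXT i])
  obtain ⟨k, hk⟩ := hF
  have hTlarge := h.two_mul_transitLoss_add_one_le hT hk (by nlinarith [hYflip k hk])
  have hloss := transitLoss_nonneg h.rate_pos δ
  refine ⟨T, by linarith, fun i => ⟨by linarith [hXT i], ?_⟩, fun i hi t ht hXt => ?_,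
    fun i hi => h.existsUnique_zero hT hR hi (by linarith [hXT i])⟩
  · by_cases hi : i ∈ F
    · exact hYflip i hi
    have hgain := h.min_sub_transitLoss_le le_rfl hT (fun t ht => hR t (Ioo_subset_Icc_self ht))
      (fun t ht => hlag t (Ioo_subset_Ico_self ht)) i
    have hregain : γ' i * transitLoss γ δ ≤ γ' i * (T / 2) :=
      mul_le_mul_of_nonneg_left (by linarith) (h.slowRate_pos i).le
    rcases min_cases 1 (Y 0 i + γ' i * (1 / 2) * (T - 0)) with ⟨hmin, -⟩ | ⟨hmin, -⟩ <;>
      rw [hmin] at hgain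
    · linarith [h.slowRate_mul_transitLoss_lt i]
    · linarith [(h.isUp_init i hi).2]
  · linarith [(hR t ht i).1 hi]

end IsNormalizedRun

end NormalizedRun

/-! ### From Boolean states to normalized runs -/

section BooleanStep

variable {n : ℕ} {f : (Fin n → Bool) → Fin n → Bool} {Q : (Fin n → ℝ) → Fin n → ℝ}
  {s : Fin n → Bool}

theorem mem_Wset_iff {x : Fin n → ℝ} : x ∈ Wset n s ↔ ∀ i, 1 < boolSign (s i) * x i := by
  refine forall_congr' fun i => ?_
  cases s i <;> simp [boolSign, lt_neg]

theorem boolSign_Sdisc_mul (x : Fin n → ℝ) (j : Fin n) :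
    boolSign (Sdisc n x j) * x j = |x j| := by
  rcases lt_or_ge 0 (x j) with h | h
  · simp [Sdisc, boolSign, h, abs_of_pos h]
  · simp [Sdisc, boolSign, h.not_gt, abs_of_nonpos h]

theorem Sdisc_eq_of_pos {x : Fin n → ℝ} {j : Fin n} {b : Bool} (h : 0 < boolSign b * x j) :
    Sdisc n x j = b := by
  by_contra hne
  have habs := boolSign_Sdisc_mul x j
  rw [boolSign_eq_neg_of_ne (Ne.symm hne)] at habs
  linarith [abs_nonneg (x j)]

theorem Sdisc_ne_of_neg {x : Fin n → ℝ} {j : Fin n} {b : Bool} (h : boolSign b * x j < 0) :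
    Sdisc n x j ≠ b := by
  rintro rfl
  exact h.not_ge (boolSign_Sdisc_mul x j ▸ abs_nonneg (x j))

namespace IsConversion

theorem two_mul_sub_one_eq (hQ : IsConversion n f Q) {x : Fin n → ℝ} (hx : x ∈ Wset n s)
    (i : Fin n) : 2 * Q x i - 1 = boolSign (f s i) := by
  rw [hQ.2.2 s x hx i]
  cases f s i <;> norm_num [boolSign]

theorem abs_two_mul_sub_one_le (hQ : IsConversion n f Q) (x : Fin n → ℝ) (i : Fin n) :
    |2 * Q x i - 1| ≤ 1 := by
  obtain ⟨h₀, h₁⟩ := hQ.2.1 x i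
  exact abs_le.2 ⟨by linarith, by linarith⟩

-- Pushing every coordinate away from `0` by `δ` moves `x` into `W^{S(x)}`, where `Q` is known.
theorem eventually_le_boolSign_mul (hQ : IsConversion n f Q) (R : ℝ) {ε : ℝ} (hε : 0 < ε) :
    ∀ᶠ δ in 𝓝[>] 0, ∀ x, ‖x‖ ≤ R → (∀ j, 1 - δ < |x j|) →
      ∀ i, 1 - ε ≤ boolSign (f (Sdisc n x) i) * (2 * Q x i - 1) := by
  have hunif : UniformContinuousOn Q (Metric.closedBall 0 (R + 1)) :=
    (isCompact_closedBall 0 (R + 1)).uniformContinuousOn_of_continuous hQ.1.continuousOn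
  obtain ⟨η, hη, hclose⟩ := Metric.uniformContinuousOn_iff.1 hunif (ε / 2) (half_pos hε)
  filter_upwards [Ioo_mem_nhdsGT (lt_min hη one_pos)] with δ hδ x hx hxδ i
  have hδη : δ < η := hδ.2.trans_le (min_le_left _ _)
  have hδ1 : δ < 1 := hδ.2.trans_le (min_le_right _ _)
  set r := Sdisc n x
  set z : Fin n → ℝ := fun j => x j + boolSign (r j) * δ
  have hzW : z ∈ Wset n r := mem_Wset_iff.2 fun j => by
    have : boolSign (r j) * z j = |x j| + δ := by
      rw [mul_add, boolSign_Sdisc_mul, ← mul_assoc, boolSign_mul_self, one_mul]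
    linarith [hxδ j]
  have hdist : dist z x ≤ δ := (dist_pi_le_iff hδ.1.le).2 fun j => by
    rw [Real.dist_eq, add_sub_cancel_left, abs_boolSign_mul, abs_of_pos hδ.1]
  have hz : ‖z‖ ≤ R + 1 := by linarith [norm_le_norm_add_norm_sub' z x, dist_eq_norm z x]
  have hQi : |Q z i - Q x i| < ε / 2 := (dist_le_pi_dist (Q z) (Q x) i).trans_lt
    (hclose z (by simpa using hz) x (by simpa using by linarith) (hdist.trans_lt hδη))
  have habs : |boolSign (f r i) * (Q z i - Q x i)| < ε / 2 := by rwa [abs_boolSign_mul]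
  have hgap : boolSign (f r i) * (2 * Q x i - 1) =
      1 - 2 * (boolSign (f r i) * (Q z i - Q x i)) := by
    linear_combination boolSign (f r i) * hQ.two_mul_sub_one_eq hzW i + boolSign_mul_self (f r i)
  linarith [le_abs_self (boolSign (f r i) * (Q z i - Q x i))]

end IsConversion

/-- `δ` is a width of the neighbourhoods of the wells on which the input of the signaling variables
already points to the image under `f` of the discretized state, with strength `5 / 6` exceeding the
critical input `2 / 3`. -/
structure IsWellWidth (f : (Fin n → Bool) → Fin n → Bool) (Q : (Fin n → ℝ) → Fin n → ℝ)
    (δ : ℝ) : Prop where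
  pos : 0 < δ
  le : δ ≤ 1 / 4
  le_input : ∀ x, ‖x‖ ≤ 5 / 2 → (∀ j, 1 - δ < |x j|) →
    ∀ i, 5 / 6 ≤ boolSign (f (Sdisc n x) i) * (2 * Q x i - 1)

theorem IsConversion.exists_isWellWidth (hQ : IsConversion n f Q) : ∃ δ, IsWellWidth f Q δ := by
  obtain ⟨δ, hδQ, hδ⟩ := ((hQ.eventually_le_boolSign_mul (5 / 2) (ε := 1 / 6) (by norm_num)).and
    (Ioc_mem_nhdsGT (by norm_num : (0 : ℝ) < 1 / 4))).exists
  exact ⟨δ, hδ.1, hδ.2, fun x hx hxδ i => by linarith [hδQ x hx hxδ i]⟩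

/-- The state `s` is monotone for `f`: all states `r` with `s ⪯ r ≺ f s` have the same image. -/
def IsMonotoneState (f : (Fin n → Bool) → Fin n → Bool) (s : Fin n → Bool) : Prop :=
  ∀ r : Fin n → Bool, (∀ i, f s i = s i → r i = s i) → r ≠ f s → f r = f s

theorem IsMonotoneState.apply_Sdisc_eq (hs : IsMonotoneState f s) {x : Fin n → ℝ}
    (hstay : ∀ j, f s j = s j → 0 < boolSign (f s j) * x j)
    (hlag : ∃ j, boolSign (f s j) * x j < 0) : f (Sdisc n x) = f s := by
  obtain ⟨j, hj⟩ := hlag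
  exact hs _ (fun i hi => (Sdisc_eq_of_pos (hstay i hi)).trans hi)
    fun h => Sdisc_ne_of_neg hj (congrFun h j)

namespace IsSolD2

variable {γ γ' : Fin n → ℝ} {x y : ℝ → Fin n → ℝ}

theorem isCubicSol_signature (h : IsSolD2 n γ γ' Q x y) (i : Fin n) :
    IsCubicSol (γ i) (fun t => centeredLpl (y t i)) (fun t => x t i) := fun t ht =>
  (h i t ht).1.congr_deriv (by rw [gcub_add_six_mul]; rfl)

theorem isCubicSol_signaling (h : IsSolD2 n γ γ' Q x y) (i : Fin n) :
    IsCubicSol (γ' i) (fun t => 2 * Q (x t) i - 1) (fun t => y t i) := fun t ht =>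
  (h i t ht).2.congr_deriv (by rw [gcub_add_six_mul])

end IsSolD2

/-- The set `U^s` of states all of whose coordinates have settled in the wells prescribed by `s`,
within the open box of radius `p`. -/
def basin (δ p : ℝ) (s : Fin n → Bool) : Set ((Fin n → ℝ) × (Fin n → ℝ)) :=
  {z | ∀ i, IsUp δ (boolSign (s i) * z.1 i) (boolSign (s i) * z.2 i) ∧ |z.1 i| < p ∧ |z.2 i| < p}

theorem basin_nonempty {p : ℝ} (hp : 3 / 2 < p) (δ : ℝ) (s : Fin n → Bool) :
    (basin δ p s).Nonempty := by
  refine ⟨(fun i => boolSign (s i) * (3 / 2), fun i => boolSign (s i) * (3 / 2)), fun i => ?_⟩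
  simp only [IsUp, ← mul_assoc, boolSign_mul_self, abs_boolSign_mul]
  rw [abs_of_pos (by norm_num)]
  exact ⟨⟨by norm_num, by nlinarith [sq_nonneg δ]⟩, hp, hp⟩

theorem isOpen_basin (δ p : ℝ) (s : Fin n → Bool) : IsOpen (basin δ p s) := by
  simp only [basin, IsUp, ofPred_forall, ofPred_and]
  refine isOpen_iInter_of_finite fun i => ((isOpen_lt ?_ ?_).inter (isOpen_lt ?_ ?_)).inter
    ((isOpen_lt ?_ ?_).inter (isOpen_lt ?_ ?_)) <;> fun_prop

theorem basin_subset (δ p : ℝ) (s : Fin n → Bool) : basin δ p s ⊆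
    {z | z.1 ∈ Wset n s ∧ ∀ i, z.1 i ∈ Icc (-p) p ∧ z.2 i ∈ Icc (-p) p} :=
  fun _ hz => ⟨mem_Wset_iff.2 fun i => by linarith [(hz i).1.1],
    fun i => ⟨abs_le.1 (hz i).2.1.le, abs_le.1 (hz i).2.2.le⟩⟩

section Trajectory

variable {γ γ' : Fin n → ℝ} {x y : ℝ → Fin n → ℝ} {δ p : ℝ}

theorem IsSolD2.abs_lt_of_mem_basin (hxy : IsSolD2 n γ γ' Q x y) (hQ : IsConversion n f Q)
    (hγ : ∀ i, 0 < γ i) (hγ' : ∀ i, 0 < γ' i) (hp : cubicField p 1 = 0)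
    (h0 : (x 0, y 0) ∈ basin δ p s) {t : ℝ} (ht : 0 ≤ t) (i : Fin n) :
    |x t i| < p ∧ |y t i| < p :=
  ⟨(hxy.isCubicSol_signature i).abs_lt_of_cubicField_eq_zero (hγ i).le hp
      (fun _ _ => abs_centeredLpl_le _) (h0 i).2.1 ht,
    (hxy.isCubicSol_signaling i).abs_lt_of_cubicField_eq_zero (hγ' i).le hp
      (fun _ _ => hQ.abs_two_mul_sub_one_le _ i) (h0 i).2.2 ht⟩

theorem IsWellWidth.le_input_of_isMonotoneState (hδ : IsWellWidth f Q δ)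
    (hs : IsMonotoneState f s) {z : Fin n → ℝ} (hz : ∀ j, |z j| ≤ 5 / 2)
    (hstay : ∀ j, f s j = s j → 0 < boolSign (f s j) * z j)
    (htransit : ∀ j, boolSign (f s j) * z j ∉ Icc (-1 + δ) (4 / 3))
    (hlag : ∃ j, boolSign (f s j) * z j < 4 / 3) (i : Fin n) :
    5 / 6 ≤ boolSign (f s i) * (2 * Q z i - 1) := by
  have hδ' := hδ.le
  have hout : ∀ j, boolSign (f s j) * z j < -1 + δ ∨ 4 / 3 < boolSign (f s j) * z j := by
    simpa only [mem_Icc, not_and_or, not_le] using htransit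
  have hwell : ∀ j, 1 - δ < |z j| := fun j => by
    rw [← abs_boolSign_mul (f s j), lt_abs]
    rcases hout j with h | h
    · exact Or.inr (by linarith)
    · exact Or.inl (by linarith [hδ.pos])
  obtain ⟨k, hk⟩ := hlag
  have himage : f (Sdisc n z) = f s :=
    hs.apply_Sdisc_eq hstay ⟨k, by linarith [(hout k).resolve_right hk.not_gt]⟩
  rw [← himage]
  exact hδ.le_input z ((pi_norm_le_iff_of_nonneg (by norm_num)).2 hz) hwell i

theorem IsSolD2.isNormalizedRun (hxy : IsSolD2 n γ γ' Q x y) (hQ : IsConversion n f Q)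
    (hγ : ∀ i, 0 < γ i) (hγ' : ∀ i, 0 < γ' i) (hγδ : ∀ i, γ' i < slowRateBound γ δ)
    (hδ : IsWellWidth f Q δ) (hp : cubicField p 1 = 0) (hp' : p ≤ 5 / 2)
    (hs : IsMonotoneState f s) (h0 : (x 0, y 0) ∈ basin δ p s) :
    IsNormalizedRun γ γ' {i | f s i ≠ s i} δ (fun t i => boolSign (f s i) * x t i)
      (fun t i => boolSign (f s i) * y t i)
      (fun t i => boolSign (f s i) * (2 * Q (x t) i - 1)) where
  rate_pos := hγ
  slowRate_pos := hγ'
  slowRate_lt := hγδ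
  width_pos := hδ.pos
  width_le := hδ.le
  signature i := by
    simpa only [centeredLpl_boolSign_mul] using (hxy.isCubicSol_signature i).boolSign_mul (f s i)
  signaling i := (hxy.isCubicSol_signaling i).boolSign_mul (f s i)
  abs_input_le t _ i := by
    rw [abs_boolSign_mul]
    exact hQ.abs_two_mul_sub_one_le (x t) i
  abs_signature_le t ht i := by
    rw [abs_boolSign_mul]
    exact (hxy.abs_lt_of_mem_basin hQ hγ hγ' hp h0 ht i).1.le.trans hp'
  abs_signaling_le t ht i := by
    rw [abs_boolSign_mul]
    exact (hxy.abs_lt_of_mem_basin hQ hγ hγ' hp h0 ht i).2.le.trans hp'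
  le_input t ht hstay htransit hlag := hδ.le_input_of_isMonotoneState hs
    (fun j => (hxy.abs_lt_of_mem_basin hQ hγ hγ' hp h0 ht j).1.le.trans hp')
    (fun j hj => by linarith [hstay j (not_not.2 hj)]) htransit hlag
  isUp_init j hj := by
    rw [not_not.1 hj]
    exact (h0 j).1
  isDown_init j hj := by
    have hup := (h0 j).1
    have hδ₀ := hδ.pos
    have hδ₁ := hδ.le
    rw [boolSign_eq_neg_of_ne (Ne.symm hj), neg_mul, neg_mul]
    exact ⟨by linarith [hup.1], by nlinarith [hup.2]⟩

end Trajectory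

theorem cubicField_neg_eq_zero_of_gcub_eq_zero {z : ℝ} (hz : gcub z = 0) :
    cubicField (-z) 1 = 0 := by
  unfold gcub at hz
  unfold cubicField
  linarith

theorem mem_Ioc_of_cubicField_one_eq_zero {p : ℝ} (hp : cubicField p 1 = 0) :
    p ∈ Ioc (3 / 2) (5 / 2) := by
  unfold cubicField at hp
  constructor <;> by_contra! h
  · nlinarith [mul_nonneg (sq_nonneg (p + 1)) (by linarith : 0 ≤ 2 - p)]
  · nlinarith [mul_nonneg (by linarith : 0 ≤ p - 5 / 2) (sq_nonneg p), sq_nonneg p]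

end BooleanStep

/-- the key inductive step in the proof of the main Theorem:
under sufficient separation of time scales, a trajectory started in `U^s`
for a monotone non-fixed state `s` reaches `U^{f(s)}` at some time
`T ≥ T_min`, with conditions (A), (B), (C). -/
theorem stmt_11 (n : ℕ) (f : (Fin n → Bool) → Fin n → Bool)
    (Q : (Fin n → ℝ) → Fin n → ℝ) (hQ : IsConversion n f Q)
    (γ : Fin n → ℝ) (hγ : ∀ i, 0 < γ i)
    (xm : ℝ) (hxm : gcub xm = 0) (hxmu : ∀ z, gcub z = 0 → z = xm) :
    ∃ μ Tmin : ℝ, 0 < μ ∧ 0 < Tmin ∧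
    ∃ U : (Fin n → Bool) → Set ((Fin n → ℝ) × (Fin n → ℝ)),
      (∀ s, (U s).Nonempty ∧ IsOpen (U s) ∧
        U s ⊆ {p | p.1 ∈ Wset n s ∧
          ∀ i, p.1 i ∈ Set.Icc xm (-xm) ∧ p.2 i ∈ Set.Icc xm (-xm)}) ∧
      ∀ γ' : Fin n → ℝ, (∀ i, 0 < γ' i ∧ γ' i < μ) →
      ∀ s : Fin n → Bool,
        (∀ sst : Fin n → Bool,
          (∀ i, f s i = s i → sst i = s i) → sst ≠ f s → f sst = f s) →
        f s ≠ s →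
      ∀ x y : ℝ → Fin n → ℝ, IsSolD2 n γ γ' Q x y →
      (x 0, y 0) ∈ U s →
      ∃ T : ℝ, Tmin ≤ T ∧
        (x T, y T) ∈ U (f s) ∧
        (∀ i, f s i = s i → ∀ t ∈ Set.Icc (0 : ℝ) T, x t i ≠ 0) ∧
        (∀ i, f s i ≠ s i → ∃! t : ℝ, t ∈ Set.Icc (0 : ℝ) T ∧ x t i = 0) := by
  have hp := cubicField_neg_eq_zero_of_gcub_eq_zero hxm
  obtain ⟨hp₁, hp₂⟩ := mem_Ioc_of_cubicField_one_eq_zero hp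
  obtain ⟨δ, hδ⟩ := hQ.exists_isWellWidth
  refine ⟨slowRateBound γ δ, 1, slowRateBound_pos hγ hδ.pos, one_pos, basin δ (-xm),
    fun s => ⟨basin_nonempty hp₁ δ s, isOpen_basin δ _ s, ?_⟩, ?_⟩
  · simpa only [neg_neg] using basin_subset δ (-xm) s
  intro γ' hγ' s hs hfix x y hxy h0
  have hγ'_pos : ∀ i, 0 < γ' i := fun i => (hγ' i).1
  have hrun := hxy.isNormalizedRun hQ hγ hγ'_pos (fun i => (hγ' i).2) hδ hp hp₂ hs h0
  obtain ⟨T, hT, hup, hstay, hflip⟩ := hrun.exists_switchTime (Function.ne_iff.1 hfix)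
  have hbox := hxy.abs_lt_of_mem_basin hQ hγ hγ'_pos hp h0 (zero_le_one.trans hT)
  refine ⟨T, hT, fun i => ⟨hup i, hbox i⟩, fun i hi t ht hxt => ?_, fun i hi => ?_⟩
  · exact hstay i (not_not.2 hi) t ht (mul_eq_zero_of_right _ hxt)
  · simpa only [mul_eq_zero, boolSign_ne_zero, false_or] using hflip i hi
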